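/- Let r ∈ [0,1), p ∈ ℝ, and let K ⊆ ℝ^d be compact. Suppose φ(y,ξ,ζ,t) is a smooth real-valued function such that for every multi-index β there is C_β with sup_{y∈K} |∂_y^β φ(y,ξ,ζ,t)| ≤ C_β |ξ|^{r−1}|ζ| for all ξ, ζ, t under consideration. Suppose w(y,ξ,ζ,t) is smooth in y, vanishes for y ∉ K, and for every multi-index β satisfies |∂_y^β w(y,ξ,ζ,t)| ≤ C_β |ξ|^p whenever |ζ| ≤ |ξ|/2. Then, for parameters restricted to 1 ≤ |ζ| ≤ |ξ|/2, there exists a function w̃(y,ξ,ζ,t), smooth in y and vanishing for y ∉ K, satisfying the same type of bounds |∂_y^β w̃(y,ξ,ζ,t)| ≤ C'_β |ξ|^p (with constants depending only on the constants above, r, p and K), such that |ζ| ∫_{ℝ^d} w(y,ξ,ζ,t) e^{iφ(y,ξ,ζ,t)} e^{−i⟨y,ζ⟩} dy = ∫_{ℝ^d} w̃(y,ξ,ζ,t) e^{iφ(y,ξ,ζ,t)} e^{−i⟨y,ζ⟩} dy. -/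

import Mathlib

open MeasureTheory Filter Topology

noncomputable section

/-- Dot product on `ℝ^d`. -/
def dotp {d : ℕ} (x ξ : Fin d → ℝ) : ℝ := ∑ i, x i * ξ i

/-- Directional derivative of a function between normed spaces. -/
def dirDeriv {E F : Type*} [NormedAddCommGroup E] [NormedSpace ℝ E]
    [NormedAddCommGroup F] [NormedSpace ℝ F] (v : E) (f : E → F) : E → F :=
  fun x => fderiv ℝ f x v

/-- Iterated directional derivatives along a list of directions. -/
def dirDerivList {E F : Type*} [NormedAddCommGroup E] [NormedSpace ℝ E]
    [NormedAddCommGroup F] [NormedSpace ℝ F] : List E → (E → F) → E → F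
  | [], f => f
  | v :: l, f => dirDeriv v (dirDerivList l f)

/-- Multi-index partial derivative `∂^α` with respect to a family of directions. -/
def mpderivB {n : ℕ} {E F : Type*} [NormedAddCommGroup E] [NormedSpace ℝ E]
    [NormedAddCommGroup F] [NormedSpace ℝ F] (b : Fin n → E) (α : Fin n → ℕ)
    (f : E → F) : E → F :=
  dirDerivList ((List.finRange n).flatMap fun i => List.replicate (α i) (b i)) f

/-- Multi-index partial derivative `∂^α` on `ℝ^d`. -/
def mpderiv {d : ℕ} {F : Type*} [NormedAddCommGroup F] [NormedSpace ℝ F]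
    (α : Fin d → ℕ) (f : (Fin d → ℝ) → F) : (Fin d → ℝ) → F :=
  mpderivB (fun i => Pi.single i 1) α f

/-- Order `|α|` of a multi-index. -/
def mOrder {d : ℕ} (α : Fin d → ℕ) : ℕ := ∑ i, α i

/-- Factorial `α!` of a multi-index. -/
def mFactorial {d : ℕ} (α : Fin d → ℕ) : ℕ := ∏ i, (α i).factorial

/-- Power `ζ^α`. -/
def mpow {d : ℕ} (ζ : Fin d → ℝ) (α : Fin d → ℕ) : ℝ := ∏ i, ζ i ^ α i

/-- The finset of multi-indices of order `< N`. -/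
def mIdxLt (d N : ℕ) : Finset (Fin d → ℕ) :=
  (Fintype.piFinset fun _ : Fin d => Finset.range N).filter fun α => mOrder α < N

/-- The finset of multi-indices of order `= N`. -/
def mIdxEq (d N : ℕ) : Finset (Fin d → ℕ) :=
  (Fintype.piFinset fun _ : Fin d => Finset.range (N + 1)).filter fun α => mOrder α = N

/-- Hörmander symbol class `S^m_{ρ,δ}(X × ℝ^d)`. -/
def IsSymbol {d : ℕ} (X : Set (Fin d → ℝ)) (m ρ δ : ℝ)
    (a : (Fin d → ℝ) → (Fin d → ℝ) → ℂ) : Prop :=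
  ContDiffOn ℝ (⊤ : ℕ∞) (fun q : (Fin d → ℝ) × (Fin d → ℝ) => a q.1 q.2) (X ×ˢ Set.univ) ∧
  ∀ (α β : Fin d → ℕ) (K : Set (Fin d → ℝ)), IsCompact K → K ⊆ X →
    ∃ C : ℝ, ∀ x ∈ K, ∀ ξ : Fin d → ℝ,
      ‖mpderiv β (fun y => mpderiv α (fun η => a y η) ξ) x‖ ≤
        C * (1 + ‖ξ‖) ^ (m - ρ * (mOrder α : ℝ) + δ * (mOrder β : ℝ))

/-- Hörmander amplitude class `S^m_{ρ,δ,δ}(X × X × ℝ^d)`. -/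
def IsAmplitude {d : ℕ} (X : Set (Fin d → ℝ)) (m ρ δ : ℝ)
    (a : (Fin d → ℝ) → (Fin d → ℝ) → (Fin d → ℝ) → ℂ) : Prop :=
  ContDiffOn ℝ (⊤ : ℕ∞)
    (fun q : ((Fin d → ℝ) × (Fin d → ℝ)) × (Fin d → ℝ) => a q.1.1 q.1.2 q.2)
    ((X ×ˢ X) ×ˢ Set.univ) ∧
  ∀ (α β β' : Fin d → ℕ) (K : Set (Fin d → ℝ)), IsCompact K → K ⊆ X →
    ∃ C : ℝ, ∀ x ∈ K, ∀ x' ∈ K, ∀ ξ : Fin d → ℝ,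
      ‖mpderiv β (fun y => mpderiv β' (fun y' => mpderiv α (fun η => a y y' η) ξ) x') x‖ ≤
        C * (1 + ‖ξ‖) ^ (m - ρ * (mOrder α : ℝ) + δ * ((mOrder β : ℝ) + (mOrder β' : ℝ)))

/-- `C₀^∞(X)` test functions. -/
def IsTestFun {d : ℕ} (X : Set (Fin d → ℝ)) (u : (Fin d → ℝ) → ℂ) : Prop :=
  ContDiff ℝ (⊤ : ℕ∞) u ∧ HasCompactSupport u ∧ tsupport u ⊆ X

/-- Fourier transform `(2π)^{-d/2} ∫ e^{-i⟨x,ξ⟩} u(x) dx`. -/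
def fourierHat {d : ℕ} (u : (Fin d → ℝ) → ℂ) (ξ : Fin d → ℝ) : ℂ :=
  (((2 * Real.pi) ^ (-(d : ℝ) / 2) : ℝ) : ℂ) *
    ∫ x : Fin d → ℝ, Complex.exp (-(Complex.I * (dotp x ξ : ℂ))) * u x

/-- Pseudo-differential operator with symbol `a`. -/
def Op {d : ℕ} (a : (Fin d → ℝ) → (Fin d → ℝ) → ℂ) (u : (Fin d → ℝ) → ℂ) :
    (Fin d → ℝ) → ℂ := fun x =>
  (((2 * Real.pi) ^ (-(d : ℝ) / 2) : ℝ) : ℂ) *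
    ∫ ξ : Fin d → ℝ, Complex.exp (Complex.I * (dotp x ξ : ℂ)) * a x ξ * fourierHat u ξ

/-- Pseudo-differential operator with amplitude `a` (iterated integral). -/
def OpAmp {d : ℕ} (a : (Fin d → ℝ) → (Fin d → ℝ) → (Fin d → ℝ) → ℂ)
    (u : (Fin d → ℝ) → ℂ) : (Fin d → ℝ) → ℂ := fun x =>
  (((2 * Real.pi) ^ (-(d : ℝ)) : ℝ) : ℂ) *
    ∫ ξ : Fin d → ℝ, ∫ x' : Fin d → ℝ,
      Complex.exp (Complex.I * (dotp (x - x') ξ : ℂ)) * a x x' ξ * u x'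

/-- The formal adjoint `A*` of the PDO with symbol `a`. -/
def OpAdj {d : ℕ} (a : (Fin d → ℝ) → (Fin d → ℝ) → ℂ) (u : (Fin d → ℝ) → ℂ) :
    (Fin d → ℝ) → ℂ := fun x =>
  (((2 * Real.pi) ^ (-(d : ℝ)) : ℝ) : ℂ) *
    ∫ ξ : Fin d → ℝ, ∫ x' : Fin d → ℝ,
      Complex.exp (Complex.I * (dotp (x - x') ξ : ℂ)) * (starRingEnd ℂ) (a x' ξ) * u x'

/-- Gradient of a real-valued function on `ℝ^d`. -/
def gradR {d : ℕ} (f : (Fin d → ℝ) → ℝ) (x : Fin d → ℝ) : Fin d → ℝ :=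
  fun i => fderiv ℝ f x (Pi.single i 1)

end

section helpers

variable {d : ℕ} {F : Type*} [NormedAddCommGroup F] [NormedSpace ℝ F]

lemma dirDeriv_contDiff {E : Type*} [NormedAddCommGroup E] [NormedSpace ℝ E] {f : E → F}
    (hf : ContDiff ℝ (⊤ : ℕ∞) f) (v : E) : ContDiff ℝ (⊤ : ℕ∞) (dirDeriv v f) := by
  have h : ContDiff ℝ (⊤ : ℕ∞) (fderiv ℝ f) := hf.fderiv_right (by simp)
  exact h.clm_apply contDiff_const

lemma dirDerivList_contDiff {E : Type*} [NormedAddCommGroup E] [NormedSpace ℝ E] {f : E → F}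
    (hf : ContDiff ℝ (⊤ : ℕ∞) f) (l : List E) : ContDiff ℝ (⊤ : ℕ∞) (dirDerivList l f) := by
  induction l with
  | nil => exact hf
  | cons v l ih => exact dirDeriv_contDiff ih v

lemma dirDeriv_comm {E : Type*} [NormedAddCommGroup E] [NormedSpace ℝ E] {f : E → F}
    (hf : ContDiff ℝ (⊤ : ℕ∞) f) (v u : E) :
    dirDeriv v (dirDeriv u f) = dirDeriv u (dirDeriv v f) := by
  have h : ContDiff ℝ (⊤ : ℕ∞) (fderiv ℝ f) := hf.fderiv_right (by simp)
  have hd : Differentiable ℝ (fderiv ℝ f) := h.differentiable (by simp)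
  have key : ∀ (a b x : E), dirDeriv a (dirDeriv b f) x = fderiv ℝ (fderiv ℝ f) x a b := by
    intro a b x
    unfold dirDeriv
    rw [fderiv_clm_apply (hd x) (differentiableAt_const b)]
    simp
  funext x
  rw [key, key]
  have hs : IsSymmSndFDerivAt ℝ f x := by
    apply (hf.contDiffAt (x := x)).isSymmSndFDerivAt
    simp only [minSmoothness_of_isRCLikeNormedField]
    exact WithTop.coe_le_coe.2 (le_top : (2 : ℕ∞) ≤ ⊤)
  exact hs v u

lemma dirDerivList_perm {E : Type*} [NormedAddCommGroup E] [NormedSpace ℝ E] {f : E → F}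
    (hf : ContDiff ℝ (⊤ : ℕ∞) f) {l l' : List E} (h : l.Perm l') :
    dirDerivList l f = dirDerivList l' f := by
  induction h with
  | nil => rfl
  | cons x _ ih => simp only [dirDerivList, ih]
  | swap x y l => exact dirDeriv_comm (dirDerivList_contDiff hf l) y x
  | trans _ _ h1 h2 => exact h1.trans h2

lemma dirDerivList_eq {E : Type*} [NormedAddCommGroup E] [NormedSpace ℝ E] {f : E → F}
    (hf : ContDiff ℝ (⊤ : ℕ∞) f) (l : List E) (x : E) :
    dirDerivList l f x = iteratedFDeriv ℝ l.length f x l.get := by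
  induction l generalizing x with
  | nil => simp [dirDerivList]
  | cons v l ih =>
    change _ = (fderiv ℝ (iteratedFDeriv ℝ l.length f) x : E → _) v l.get
    have h1 : dirDerivList l f = fun x => iteratedFDeriv ℝ l.length f x l.get := funext ih
    have hd : DifferentiableAt ℝ (iteratedFDeriv ℝ l.length f) x :=
      (hf.differentiable_iteratedFDeriv (by exact_mod_cast ENat.coe_lt_top _)) x
    simp only [dirDerivList, h1, dirDeriv]
    have h2 := (((ContinuousMultilinearMap.apply ℝ (fun _ : Fin l.length => E) F
      l.get).hasFDerivAt).comp x hd.hasFDerivAt).fderiv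
    have h3 : fderiv ℝ (fun x => iteratedFDeriv ℝ l.length f x l.get) x = _ := h2
    rw [h3]
    rfl

lemma norm_dirDerivList_le {E : Type*} [NormedAddCommGroup E] [NormedSpace ℝ E] {f : E → F}
    (hf : ContDiff ℝ (⊤ : ℕ∞) f) (l : List E) (hl : ∀ v ∈ l, ‖v‖ ≤ 1) (x : E) :
    ‖dirDerivList l f x‖ ≤ ‖iteratedFDeriv ℝ l.length f x‖ := by
  rw [dirDerivList_eq hf]
  refine (ContinuousMultilinearMap.le_opNorm _ _).trans ?_
  apply mul_le_of_le_one_right (norm_nonneg _)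
  exact Finset.prod_le_one (fun _ _ => norm_nonneg _) (fun i _ => hl _ (List.get_mem _ _))

def cnt {n : ℕ} (σ : Fin n → Fin d) (i : Fin d) : ℕ := (List.ofFn σ).count i

lemma flat_perm (L : List (Fin d)) :
    L.Perm ((List.finRange d).flatMap fun i => List.replicate (L.count i) i) := by
  rw [List.perm_iff_count]
  intro a
  rw [List.count_flatMap]
  have : (List.map (List.count a ∘ fun i => List.replicate (L.count i) i) (List.finRange d)).sum
      = ∑ i : Fin d, if i = a then L.count i else 0 := by
    rw [← List.ofFn_eq_map, List.sum_ofFn]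
    simp [List.count_replicate]
  rw [this]
  simp

lemma mpderiv_cnt {n : ℕ} (σ : Fin n → Fin d) {f : (Fin d → ℝ) → F}
    (hf : ContDiff ℝ (⊤ : ℕ∞) f) (x : Fin d → ℝ) :
    mpderiv (cnt σ) f x = iteratedFDeriv ℝ n f x (fun k => Pi.single (σ k) 1) := by
  have h : ((List.ofFn σ).map (fun i => (Pi.single i 1 : Fin d → ℝ))).Perm
      ((List.finRange d).flatMap fun i => List.replicate (cnt σ i) (Pi.single i 1)) := by
    have := (flat_perm (List.ofFn σ)).map (fun i => (Pi.single i 1 : Fin d → ℝ))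
    simpa [List.map_flatMap, cnt] using this
  unfold mpderiv mpderivB
  rw [← dirDerivList_perm hf h, List.map_ofFn]
  have h2 : ∀ (m : ℕ) (g : Fin m → (Fin d → ℝ)),
      dirDerivList (List.ofFn g) f x = iteratedFDeriv ℝ m f x g := by
    intro m g
    rw [dirDerivList_eq hf]
    have : ∀ (k : ℕ) (hk : k = m) (u : Fin k → (Fin d → ℝ)),
        (∀ i, u i = g (Fin.cast hk i)) →
        iteratedFDeriv ℝ k f x u = iteratedFDeriv ℝ m f x g := by
      intro k hk u hu
      subst hk
      congr 1
      funext i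
      exact hu i
    apply this _ (List.length_ofFn)
    intro i
    simp
    rfl
  exact h2 n _

lemma norm_iter_le (n : ℕ) {f : (Fin d → ℝ) → F}
    (hf : ContDiff ℝ (⊤ : ℕ∞) f) (x : Fin d → ℝ) :
    ‖iteratedFDeriv ℝ n f x‖ ≤ ∑ σ : Fin n → Fin d, ‖mpderiv (cnt σ) f x‖ := by
  apply ContinuousMultilinearMap.opNorm_le_bound (Finset.sum_nonneg fun _ _ => norm_nonneg _)
  intro m
  have hm : m = fun k => ∑ i : Fin d, m k i • (Pi.single i 1 : Fin d → ℝ) := by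
    funext k
    exact pi_eq_sum_univ' (m k)
  conv_lhs => rw [hm]
  rw [ContinuousMultilinearMap.map_sum]
  refine (norm_sum_le _ _).trans ?_
  rw [Finset.sum_mul]
  apply Finset.sum_le_sum
  intro σ _
  rw [ContinuousMultilinearMap.map_smul_univ, norm_smul, mpderiv_cnt σ hf, mul_comm]
  apply mul_le_mul_of_nonneg_left _ (norm_nonneg _)
  rw [norm_prod]
  exact Finset.prod_le_prod (fun _ _ => norm_nonneg _) (fun i _ => norm_le_pi_norm _ _)

/-- Families of smooth functions with derivatives controlled on `K` by `M`. -/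
def SB {ι : Type*} (K : Set (Fin d → ℝ)) (S : Set ι) (M : ι → ℝ)
    (f : ι → (Fin d → ℝ) → F) : Prop :=
  (∀ i, ContDiff ℝ (⊤ : ℕ∞) (f i)) ∧
  ∀ n : ℕ, ∃ C : ℝ, ∀ i ∈ S, ∀ y ∈ K, ‖iteratedFDeriv ℝ n (f i) y‖ ≤ C * M i

variable {ι : Type*} {K : Set (Fin d → ℝ)} {S : Set ι} {M M' : ι → ℝ}

lemma SB.of_mpderiv {f : ι → (Fin d → ℝ) → F} (hf : ∀ i, ContDiff ℝ (⊤ : ℕ∞) (f i))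
    (h : ∀ β : Fin d → ℕ, ∃ C : ℝ, ∀ i ∈ S, ∀ y ∈ K, ‖mpderiv β (f i) y‖ ≤ C * M i) :
    SB K S M f := by
  refine ⟨hf, fun n => ?_⟩
  choose C hC using h
  refine ⟨∑ σ : Fin n → Fin d, C (cnt σ), fun i hi y hy => ?_⟩
  refine (norm_iter_le n (hf i) y).trans ?_
  rw [Finset.sum_mul]
  exact Finset.sum_le_sum fun σ _ => hC _ i hi y hy

lemma SB.mpderiv_le {f : ι → (Fin d → ℝ) → F} (h : SB K S M f) (β : Fin d → ℕ) :
    ∃ C : ℝ, ∀ i ∈ S, ∀ y ∈ K, ‖mpderiv β (f i) y‖ ≤ C * M i := by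
  obtain ⟨C, hC⟩ := h.2 ((List.finRange d).flatMap fun i =>
    List.replicate (β i) (Pi.single i 1 : Fin d → ℝ)).length
  refine ⟨C, fun i hi y hy => le_trans ?_ (hC i hi y hy)⟩
  apply norm_dirDerivList_le (h.1 i)
  intro v hv
  simp only [List.mem_flatMap, List.mem_replicate] at hv
  obtain ⟨j, _, _, rfl⟩ := hv
  refine (pi_norm_le_iff_of_nonneg zero_le_one).2 fun k => ?_
  by_cases h : k = j
  · subst h; simp
  · simp [h]

lemma SB.mono {f : ι → (Fin d → ℝ) → F} (h : SB K S M f) (h0 : ∀ i ∈ S, 0 ≤ M i)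
    (hM : ∀ i ∈ S, M i ≤ M' i) : SB K S M' f := by
  refine ⟨h.1, fun n => ?_⟩
  obtain ⟨C, hC⟩ := h.2 n
  refine ⟨|C|, fun i hi y hy => (hC i hi y hy).trans ?_⟩
  exact mul_le_mul (le_abs_self C) (hM i hi) (h0 i hi) (abs_nonneg C)

lemma SB.mul {f g : ι → (Fin d → ℝ) → ℂ} (hf : SB K S M f) (hg : SB K S M' g) :
    SB K S (fun i => M i * M' i) (fun i y => f i y * g i y) := by
  refine ⟨fun i => (hf.1 i).mul (hg.1 i), fun n => ?_⟩
  choose C hC using hf.2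
  choose D hD using hg.2
  refine ⟨∑ k ∈ Finset.range (n + 1), (n.choose k : ℝ) * C k * D (n - k), fun i hi y hy => ?_⟩
  refine (norm_iteratedFDeriv_mul_le (hf.1 i) (hg.1 i) y
    (by exact_mod_cast (le_top : (n : ℕ∞) ≤ ⊤))).trans ?_
  rw [Finset.sum_mul]
  apply Finset.sum_le_sum
  intro k _
  have h1 := hC k i hi y hy
  have h2 := hD (n - k) i hi y hy
  calc _ = (n.choose k : ℝ) * (‖iteratedFDeriv ℝ k (f i) y‖ * ‖iteratedFDeriv ℝ (n - k) (g i) y‖) := by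
        ring
    _ ≤ (n.choose k : ℝ) * ((C k * M i) * (D (n - k) * M' i)) := by
        apply mul_le_mul_of_nonneg_left _ (Nat.cast_nonneg _)
        exact mul_le_mul h1 h2 (norm_nonneg _) ((norm_nonneg _).trans h1)
    _ = _ := by ring

lemma SB.const (c : ι → ℂ) (hc : ∀ i ∈ S, ‖c i‖ ≤ M i) : SB K S M (fun i _ => c i) := by
  refine ⟨fun i => contDiff_const, fun n => ?_⟩
  refine ⟨1, fun i hi y _ => ?_⟩
  have h0 := hc i hi
  rcases Nat.eq_zero_or_pos n with rfl | hn
  · simpa using h0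
  · rw [iteratedFDeriv_const_of_ne hn.ne']
    simpa using (norm_nonneg _).trans h0

lemma SB.add {f g : ι → (Fin d → ℝ) → ℂ} (hf : SB K S M f) (hg : SB K S M g) :
    SB K S M (fun i y => f i y + g i y) := by
  refine ⟨fun i => (hf.1 i).add (hg.1 i), fun n => ?_⟩
  obtain ⟨C, hC⟩ := hf.2 n
  obtain ⟨D, hD⟩ := hg.2 n
  refine ⟨C + D, fun i hi y hy => ?_⟩
  have hn : ((n : ℕ) : WithTop ℕ∞) ≤ ((⊤ : ℕ∞) : WithTop ℕ∞) := by
    exact_mod_cast (le_top : (n : ℕ∞) ≤ ⊤)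
  have : iteratedFDeriv ℝ n (fun y => f i y + g i y) y = _ :=
    iteratedFDeriv_add_apply ((hf.1 i).of_le hn).contDiffAt ((hg.1 i).of_le hn).contDiffAt
  rw [this, add_mul]
  exact (norm_add_le _ _).trans (add_le_add (hC i hi y hy) (hD i hi y hy))

lemma SB.sum {f : ℕ → ι → (Fin d → ℝ) → ℂ} (N : ℕ) (h0 : ∀ i ∈ S, 0 ≤ M i)
    (hf : ∀ k, SB K S M (f k)) :
    SB K S M (fun i y => ∑ k ∈ Finset.range N, f k i y) := by
  induction N with
  | zero => simpa using SB.const (K := K) (S := S) (M := M) (fun _ => 0) (by simpa using h0)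
  | succ N ih => simpa [Finset.sum_range_succ] using ih.add (hf N)

lemma SB.pow {g : ι → (Fin d → ℝ) → ℂ} (hg : SB K S M g) (k : ℕ) :
    SB K S (fun i => M i ^ k) (fun i y => g i y ^ k) := by
  induction k with
  | zero => simpa using SB.const (K := K) (S := S) (M := fun _ => 1) (fun _ => 1) (by simp)
  | succ k ih => simpa [pow_succ] using ih.mul hg

lemma SB.dirDeriv {f : ι → (Fin d → ℝ) → F} (hf : SB K S M f) (v : ι → Fin d → ℝ)
    (hv : ∀ i ∈ S, ‖v i‖ ≤ 1) : SB K S M (fun i => dirDeriv (v i) (f i)) := by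
  refine ⟨fun i => dirDeriv_contDiff (hf.1 i) _, fun n => ?_⟩
  obtain ⟨C, hC⟩ := hf.2 (n + 1)
  refine ⟨C, fun i hi y hy => le_trans ?_ (hC i hi y hy)⟩
  have h : ContDiff ℝ (⊤ : ℕ∞) (fderiv ℝ (f i)) := (hf.1 i).fderiv_right (by simp)
  refine (norm_iteratedFDeriv_clm_apply_const h.contDiffAt
    (by exact_mod_cast (le_top : (n : ℕ∞) ≤ ⊤))).trans ?_
  rw [norm_iteratedFDeriv_fderiv]
  exact mul_le_of_le_one_left (norm_nonneg _) (hv i hi)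

lemma SB.ofReal {f : ι → (Fin d → ℝ) → ℝ} (hf : SB K S M f) :
    SB K S M (fun i y => (f i y : ℂ)) := by
  refine ⟨fun i => Complex.ofRealCLM.contDiff.comp (hf.1 i), fun n => ?_⟩
  obtain ⟨C, hC⟩ := hf.2 n
  refine ⟨C, fun i hi y hy => le_trans (le_of_eq ?_) (hC i hi y hy)⟩
  exact Complex.ofRealLI.norm_iteratedFDeriv_comp_left (hf.1 i).contDiffAt
    (by exact_mod_cast (le_top : (n : ℕ∞) ≤ ⊤))

lemma dirDeriv_zero_off (hK : IsClosed K) {f : (Fin d → ℝ) → F}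
    (hf : ∀ y ∉ K, f y = 0) (v : Fin d → ℝ) : ∀ y ∉ K, dirDeriv v f y = 0 := by
  intro y hy
  have : f =ᶠ[𝓝 y] fun _ => 0 := by
    filter_upwards [hK.isOpen_compl.mem_nhds hy] with z hz using hf z hz
  simp [dirDeriv, this.fderiv_eq]

lemma mpderiv_zero_off (hK : IsClosed K) {f : (Fin d → ℝ) → F}
    (hf : ∀ y ∉ K, f y = 0) (β : Fin d → ℕ) : ∀ y ∉ K, mpderiv β f y = 0 := by
  unfold mpderiv mpderivB
  generalize (List.finRange d).flatMap _ = l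
  induction l with
  | nil => exact hf
  | cons v l ih => exact dirDeriv_zero_off hK ih v

/-- The oscillating factor. -/
noncomputable def osc (ψ : (Fin d → ℝ) → ℝ) (ζ y : Fin d → ℝ) : ℂ :=
  Complex.exp (Complex.I * (ψ y : ℂ)) * Complex.exp (-(Complex.I * (dotp y ζ : ℂ)))

lemma dotp_contDiff (ζ : Fin d → ℝ) : ContDiff ℝ (⊤ : ℕ∞) (fun y => dotp y ζ) := by
  unfold dotp; fun_prop

lemma osc_contDiff {ψ : (Fin d → ℝ) → ℝ} (hψ : ContDiff ℝ (⊤ : ℕ∞) ψ) (ζ : Fin d → ℝ) :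
    ContDiff ℝ (⊤ : ℕ∞) (osc ψ ζ) := by
  have h1 : ContDiff ℝ (⊤ : ℕ∞) (fun y => (ψ y : ℂ)) := Complex.ofRealCLM.contDiff.comp hψ
  have h2 : ContDiff ℝ (⊤ : ℕ∞) (fun y => (dotp y ζ : ℂ)) :=
    Complex.ofRealCLM.contDiff.comp (dotp_contDiff ζ)
  exact (contDiff_const.mul h1).cexp.mul (contDiff_const.mul h2).neg.cexp

lemma osc_deriv {ψ : (Fin d → ℝ) → ℝ} (hψ : ContDiff ℝ (⊤ : ℕ∞) ψ) (ζ y : Fin d → ℝ) (j : Fin d) :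
    fderiv ℝ (osc ψ ζ) y (Pi.single j 1) =
      Complex.I * ((dirDeriv (Pi.single j 1) ψ y : ℝ) - (ζ j : ℂ)) * osc ψ ζ y := by
  have h1 : HasFDerivAt (fun y => (ψ y : ℂ)) (Complex.ofRealCLM.comp (fderiv ℝ ψ y)) y :=
    Complex.ofRealCLM.hasFDerivAt.comp y (hψ.differentiable (by simp) y).hasFDerivAt
  have h0 : HasFDerivAt (fun y => dotp y ζ)
      (∑ i, ζ i • (ContinuousLinearMap.proj (R := ℝ) (φ := fun _ : Fin d => ℝ) i)) y := by
    unfold dotp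
    apply HasFDerivAt.fun_sum
    intro i _
    exact (hasFDerivAt_apply (𝕜 := ℝ) i y).mul_const (ζ i)
  have h2 : HasFDerivAt (fun y => (dotp y ζ : ℂ)) _ y := Complex.ofRealCLM.hasFDerivAt.comp y h0
  have h3 := (h1.const_mul Complex.I).cexp.mul (h2.const_mul Complex.I).neg.cexp
  have h4 : HasFDerivAt (osc ψ ζ) _ y := h3
  rw [h4.fderiv]
  simp [osc, dirDeriv, Pi.single_apply]
  ring

lemma integrable_of_off (hK : IsCompact K) {u : (Fin d → ℝ) → ℂ} (hu : Continuous u)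
    (hoff : ∀ y ∉ K, u y = 0) : Integrable u :=
  hu.integrable_of_hasCompactSupport (HasCompactSupport.intro hK fun y hy => hoff y hy)

lemma ibp (hK : IsCompact K) {u : (Fin d → ℝ) → ℂ} (hu : ContDiff ℝ (⊤ : ℕ∞) u)
    (hoff : ∀ y ∉ K, u y = 0) {ψ : (Fin d → ℝ) → ℝ} (hψ : ContDiff ℝ (⊤ : ℕ∞) ψ)
    (ζ : Fin d → ℝ) (j : Fin d) (a : ℂ) (b : ℂ) (hb : b ≠ 0) (hab : a * ζ j = b) :
    b * ∫ y, u y * osc ψ ζ y =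
      (∫ y, (-Complex.I * a * dirDeriv (Pi.single j 1) u y) * osc ψ ζ y) +
      b * ∫ y, (u y * (a / b * (dirDeriv (Pi.single j 1) ψ y : ℝ))) * osc ψ ζ y := by
  have ho := osc_contDiff hψ ζ
  have hDu := dirDeriv_contDiff hu (Pi.single j 1)
  have hDψ : Continuous (fun y => ((dirDeriv (Pi.single j 1) ψ y : ℝ) : ℂ)) :=
    Complex.continuous_ofReal.comp (dirDeriv_contDiff hψ (Pi.single j 1)).continuous
  have hDoff := dirDeriv_zero_off hK.isClosed hoff (Pi.single j 1)
  have i1 : Integrable (fun y => dirDeriv (Pi.single j 1) u y * osc ψ ζ y) :=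
    integrable_of_off hK (hDu.continuous.mul ho.continuous) fun y hy => by simp [hDoff y hy]
  have i2 : Integrable (fun y => u y * osc ψ ζ y) :=
    integrable_of_off hK (hu.continuous.mul ho.continuous) fun y hy => by simp [hoff y hy]
  have i3 : Integrable (fun y => u y * (dirDeriv (Pi.single j 1) ψ y : ℝ) * osc ψ ζ y) :=
    integrable_of_off hK ((hu.continuous.mul hDψ).mul ho.continuous)
      fun y hy => by simp [hoff y hy]
  have i4 : Integrable (fun y => u y * fderiv ℝ (osc ψ ζ) y (Pi.single j 1)) :=
    integrable_of_off hK (hu.continuous.mul (dirDeriv_contDiff ho (Pi.single j 1)).continuous)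
      fun y hy => by simp [hoff y hy]
  have key := integral_mul_fderiv_eq_neg_fderiv_mul_of_integrable (μ := volume) i1 i4 i2
    (fun x _ => hu.differentiable (by simp) x) (fun x _ => ho.differentiable (by simp) x)
  have e1 : ∫ y, u y * fderiv ℝ (osc ψ ζ) y (Pi.single j 1) =
      Complex.I * (∫ y, u y * (dirDeriv (Pi.single j 1) ψ y : ℝ) * osc ψ ζ y)
        - Complex.I * ζ j * ∫ y, u y * osc ψ ζ y := by
    rw [← integral_const_mul, ← integral_const_mul, ← integral_sub (i3.const_mul _) (i2.const_mul _)]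
    congr 1; funext y
    rw [osc_deriv hψ]; ring
  have e2 : ∫ y, (-Complex.I * a * dirDeriv (Pi.single j 1) u y) * osc ψ ζ y =
      -Complex.I * a * ∫ y, dirDeriv (Pi.single j 1) u y * osc ψ ζ y := by
    rw [← integral_const_mul]; congr 1; funext y; ring
  have e3 : ∫ y, (u y * (a / b * (dirDeriv (Pi.single j 1) ψ y : ℝ))) * osc ψ ζ y =
      a / b * ∫ y, u y * (dirDeriv (Pi.single j 1) ψ y : ℝ) * osc ψ ζ y := by
    rw [← integral_const_mul]; congr 1; funext y; ring
  rw [e1] at key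
  rw [e2, e3]
  change _ = -∫ y, dirDeriv (Pi.single j 1) u y * osc ψ ζ y at key
  set A := ∫ y, u y * osc ψ ζ y
  set B := ∫ y, dirDeriv (Pi.single j 1) u y * osc ψ ζ y
  set D := ∫ y, u y * (dirDeriv (Pi.single j 1) ψ y : ℝ) * osc ψ ζ y
  have hB : B = Complex.I * ζ j * A - Complex.I * D := by linear_combination key
  have hI := Complex.I_mul_I
  have hbb : b * (a / b * D) = a * D := by field_simp
  rw [hB, hbb, ← hab]
  linear_combination (a * ζ j * A - a * D) * hI

lemma ibp_iter (hK : IsCompact K) {u : (Fin d → ℝ) → ℂ} (hu : ContDiff ℝ (⊤ : ℕ∞) u)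
    (hoff : ∀ y ∉ K, u y = 0) {ψ : (Fin d → ℝ) → ℝ} (hψ : ContDiff ℝ (⊤ : ℕ∞) ψ)
    (ζ : Fin d → ℝ) (j : Fin d) (a : ℂ) (b : ℂ) (hb : b ≠ 0) (hab : a * ζ j = b)
    (g : (Fin d → ℝ) → ℂ) (hg : ContDiff ℝ (⊤ : ℕ∞) g)
    (hgdef : ∀ y, g y = a / b * (dirDeriv (Pi.single j 1) ψ y : ℝ)) (N : ℕ) :
    b * ∫ y, u y * osc ψ ζ y =
      ∫ y, ((∑ k ∈ Finset.range N,
          -Complex.I * a * dirDeriv (Pi.single j 1) (fun y => u y * g y ^ k) y) +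
        b * (u y * g y ^ N)) * osc ψ ζ y := by
  have ho := osc_contDiff hψ ζ
  have hk : ∀ k : ℕ, ContDiff ℝ (⊤ : ℕ∞) (fun y => u y * g y ^ k) := fun k => hu.mul (hg.pow k)
  have hkoff : ∀ k : ℕ, ∀ y ∉ K, u y * g y ^ k = 0 := fun k y hy => by simp [hoff y hy]
  have hD : ∀ k : ℕ, Integrable (fun y =>
      (-Complex.I * a * dirDeriv (Pi.single j 1) (fun y => u y * g y ^ k) y) * osc ψ ζ y) := by
    intro k
    refine integrable_of_off hK
      ((continuous_const.mul (dirDeriv_contDiff (hk k) _).continuous).mul ho.continuous) ?_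
    intro y hy
    simp [dirDeriv_zero_off hK.isClosed (hkoff k) _ y hy]
  have hP : ∀ k : ℕ, Integrable (fun y => (u y * g y ^ k) * osc ψ ζ y) := by
    intro k
    exact integrable_of_off hK ((hk k).continuous.mul ho.continuous)
      fun y hy => by simp [hoff y hy]
  have main : ∀ N : ℕ, b * ∫ y, u y * osc ψ ζ y =
      (∑ k ∈ Finset.range N, ∫ y,
        (-Complex.I * a * dirDeriv (Pi.single j 1) (fun y => u y * g y ^ k) y) * osc ψ ζ y) +
      b * ∫ y, (u y * g y ^ N) * osc ψ ζ y := by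
    intro N
    induction N with
    | zero => simp
    | succ N ih =>
      rw [ih, ibp hK (hk N) (hkoff N) hψ ζ j a b hb hab, Finset.sum_range_succ, add_assoc]
      simp only [← hgdef, pow_succ, mul_assoc]
  rw [main N, ← integral_finsetSum _ (fun k _ => hD k), ← integral_const_mul,
    ← integral_add (integrable_finsetSum _ fun k _ => hD k) ((hP N).const_mul b)]
  congr 1
  funext y
  rw [add_mul, Finset.sum_mul, mul_assoc b]

end helpers

/-- Lemma 2.9 / `BC2A`: if the phase `φ` satisfies
`|∂_y^β φ| ≤ C_β |ξ|^{r-1}|ζ|` and the amplitude `w` is supported in `K` with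
`|∂_y^β w| ≤ C_β |ξ|^p`, then the growing factor `|ζ|` can be absorbed:
`|ζ| ∫ w e^{iφ} e^{-i⟨y,ζ⟩} dy = ∫ w̃ e^{iφ} e^{-i⟨y,ζ⟩} dy` with `w̃` of the same type,
uniformly over `1 ≤ |ζ| ≤ |ξ|/2` and the parameter set `T`. -/
theorem statement8 {d : ℕ} (r p : ℝ) (hr : r ∈ Set.Ico (0 : ℝ) 1)
    (K : Set (Fin d → ℝ)) (hK : IsCompact K) (T : Set ℝ)
    (φ : (Fin d → ℝ) → (Fin d → ℝ) → (Fin d → ℝ) → ℝ → ℝ)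
    (w : (Fin d → ℝ) → (Fin d → ℝ) → (Fin d → ℝ) → ℝ → ℂ)
    (hφs : ∀ (ξ ζ : Fin d → ℝ) (t : ℝ), ContDiff ℝ (⊤ : ℕ∞) fun y => φ y ξ ζ t)
    (hφ : ∀ β : Fin d → ℕ, ∃ C : ℝ, ∀ ξ ζ : Fin d → ℝ, ∀ t ∈ T,
      1 ≤ ‖ζ‖ → ‖ζ‖ ≤ ‖ξ‖ / 2 → ∀ y ∈ K,
        ‖mpderiv β (fun y' => φ y' ξ ζ t) y‖ ≤ C * ‖ξ‖ ^ (r - 1) * ‖ζ‖)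
    (hws : ∀ (ξ ζ : Fin d → ℝ) (t : ℝ), ContDiff ℝ (⊤ : ℕ∞) fun y => w y ξ ζ t)
    (hwsupp : ∀ y ∉ K, ∀ ξ ζ : Fin d → ℝ, ∀ t : ℝ, w y ξ ζ t = 0)
    (hw : ∀ β : Fin d → ℕ, ∃ C : ℝ, ∀ ξ ζ : Fin d → ℝ, ∀ t ∈ T,
      ‖ζ‖ ≤ ‖ξ‖ / 2 → ∀ y : Fin d → ℝ,
        ‖mpderiv β (fun y' => w y' ξ ζ t) y‖ ≤ C * ‖ξ‖ ^ p) :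
    ∃ wt : (Fin d → ℝ) → (Fin d → ℝ) → (Fin d → ℝ) → ℝ → ℂ,
      (∀ (ξ ζ : Fin d → ℝ) (t : ℝ), ContDiff ℝ (⊤ : ℕ∞) fun y => wt y ξ ζ t) ∧
      (∀ y ∉ K, ∀ ξ ζ : Fin d → ℝ, ∀ t : ℝ, wt y ξ ζ t = 0) ∧
      (∀ β : Fin d → ℕ, ∃ C : ℝ, ∀ ξ ζ : Fin d → ℝ, ∀ t ∈ T,
        1 ≤ ‖ζ‖ → ‖ζ‖ ≤ ‖ξ‖ / 2 → ∀ y : Fin d → ℝ,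
          ‖mpderiv β (fun y' => wt y' ξ ζ t) y‖ ≤ C * ‖ξ‖ ^ p) ∧
      (∀ ξ ζ : Fin d → ℝ, ∀ t ∈ T, 1 ≤ ‖ζ‖ → ‖ζ‖ ≤ ‖ξ‖ / 2 →
        (‖ζ‖ : ℂ) * ∫ y : Fin d → ℝ,
            w y ξ ζ t * Complex.exp (Complex.I * (φ y ξ ζ t : ℂ)) *
              Complex.exp (-(Complex.I * (dotp y ζ : ℂ)))
          = ∫ y : Fin d → ℝ,
              wt y ξ ζ t * Complex.exp (Complex.I * (φ y ξ ζ t : ℂ)) *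
                Complex.exp (-(Complex.I * (dotp y ζ : ℂ)))) := by
  rcases Nat.eq_zero_or_pos d with hd | hd
  · subst hd
    refine ⟨fun _ _ _ _ => 0, fun _ _ _ => contDiff_const, fun _ _ _ _ _ => rfl, ?_, ?_⟩
    · intro β
      refine ⟨0, fun ξ ζ t _ h1 => ?_⟩
      have : ‖ζ‖ = 0 := by rw [Subsingleton.elim ζ 0, norm_zero]
      linarith
    · intro ξ ζ t _ h1
      have : ‖ζ‖ = 0 := by rw [Subsingleton.elim ζ 0, norm_zero]
      linarith
  haveI : Nonempty (Fin d) := ⟨⟨0, hd⟩⟩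
  have hj : ∀ ζ : Fin d → ℝ, ∃ j, ‖ζ‖ = |ζ j| := by
    intro ζ
    obtain ⟨j, hj⟩ := Finite.exists_max (fun i => |ζ i|)
    exact ⟨j, le_antisymm ((pi_norm_le_iff_of_nonneg (abs_nonneg _)).2 hj) (norm_le_pi_norm ζ j)⟩
  choose J hJ using hj
  obtain ⟨hr0, hr1⟩ := hr
  obtain ⟨N, hN⟩ := exists_nat_ge (1 / (1 - r))
  have hN' : 1 ≤ (N : ℝ) * (1 - r) := by
    rwa [div_le_iff₀ (by linarith)] at hN
  let ι := (Fin d → ℝ) × (Fin d → ℝ) × ℝ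
  let S : Set ι := {i | i.2.2 ∈ T ∧ 1 ≤ ‖i.2.1‖ ∧ ‖i.2.1‖ ≤ ‖i.1‖ / 2}
  let Φ : ι → (Fin d → ℝ) → ℝ := fun i y => φ y i.1 i.2.1 i.2.2
  let W : ι → (Fin d → ℝ) → ℂ := fun i y => w y i.1 i.2.1 i.2.2
  let e : ι → Fin d → ℝ := fun i => Pi.single (J i.2.1) 1
  let a : ι → ℂ := fun i => ((‖i.2.1‖ / i.2.1 (J i.2.1) : ℝ) : ℂ)
  let b : ι → ℂ := fun i => (‖i.2.1‖ : ℂ)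
  let g : ι → (Fin d → ℝ) → ℂ := fun i y => a i / b i * (dirDeriv (e i) (Φ i) y : ℝ)
  let P : ι → ℝ := fun i => ‖i.1‖ ^ p
  let R : ι → ℝ := fun i => ‖i.1‖ ^ (r - 1)
  have hSx : ∀ i ∈ S, 2 ≤ ‖i.1‖ := by
    rintro i ⟨_, h1, h2⟩; linarith
  have hP0 : ∀ i ∈ S, 0 ≤ P i := fun i _ => Real.rpow_nonneg (norm_nonneg _) _
  have hR0 : ∀ i ∈ S, 0 ≤ R i := fun i _ => Real.rpow_nonneg (norm_nonneg _) _
  have hR1 : ∀ i ∈ S, R i ≤ 1 := fun i hi =>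
    Real.rpow_le_one_of_one_le_of_nonpos (by linarith [hSx i hi]) (by linarith)
  have hRN : ∀ i ∈ S, ‖i.2.1‖ * R i ^ N ≤ 1 := by
    intro i hi
    have hx := hSx i hi
    have h1 : R i ^ N = ‖i.1‖ ^ ((r - 1) * N) := by
      rw [Real.rpow_mul (norm_nonneg _), Real.rpow_natCast]
    have h2 : R i ^ N ≤ ‖i.1‖⁻¹ := by
      rw [h1, ← Real.rpow_neg_one]
      exact Real.rpow_le_rpow_of_exponent_le (by linarith) (by nlinarith)
    have h3 : ‖i.2.1‖ ≤ ‖i.1‖ := by linarith [hi.2.2]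
    calc ‖i.2.1‖ * R i ^ N ≤ ‖i.1‖ * ‖i.1‖⁻¹ :=
          mul_le_mul h3 h2 (pow_nonneg (hR0 i hi) _) (norm_nonneg _)
      _ = 1 := mul_inv_cancel₀ (by linarith)
  have hna : ∀ i ∈ S, ‖a i‖ ≤ 1 := by
    intro i hi
    have h1 := hJ i.2.1
    simp only [a, Complex.norm_real, norm_div, norm_norm, Real.norm_eq_abs]
    rw [abs_of_nonneg (norm_nonneg i.2.1), ← h1]
    exact div_self_le_one _
  have he : ∀ i ∈ S, ‖e i‖ ≤ 1 := by
    intro i _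
    refine (pi_norm_le_iff_of_nonneg zero_le_one).2 fun k => ?_
    by_cases h : k = J i.2.1
    · subst h; simp [e]
    · simp [e, h]
  have hΦ : SB K S (fun i => R i * ‖i.2.1‖) Φ := by
    apply SB.of_mpderiv (fun i => hφs _ _ _)
    intro β
    obtain ⟨C, hC⟩ := hφ β
    refine ⟨C, fun i hi y hy => ?_⟩
    rw [← mul_assoc]
    exact hC _ _ _ hi.1 hi.2.1 hi.2.2 y hy
  have hW : SB K S P W := by
    apply SB.of_mpderiv (fun i => hws _ _ _)
    intro β
    obtain ⟨C, hC⟩ := hw β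
    exact ⟨C, fun i hi y hy => hC _ _ _ hi.1 hi.2.2 y⟩
  have hg : SB K S R g := by
    have h1 := (SB.const (K := K) (S := S) (M := fun i => ‖i.2.1‖⁻¹) (fun i => a i / b i) (by
      intro i hi
      have h := hna i hi
      have h0 := hi.2.1
      simp only [norm_div, b, Complex.norm_real, norm_norm]
      rw [div_eq_mul_inv]
      exact mul_le_of_le_one_left (by positivity) h)).mul (hΦ.dirDeriv e he).ofReal
    refine h1.mono ?_ ?_
    · intro i hi
      have := hR0 i hi
      positivity
    · intro i hi
      have h0 := hi.2.1
      have : ‖i.2.1‖ ≠ 0 := by linarith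
      apply le_of_eq
      field_simp
  have hWk : ∀ k : ℕ, SB K S (fun i => P i * R i ^ k) (fun i y => W i y * g i y ^ k) :=
    fun k => hW.mul (hg.pow k)
  let wt : ι → (Fin d → ℝ) → ℂ := fun i y =>
    (∑ k ∈ Finset.range N, -Complex.I * a i * dirDeriv (e i) (fun y => W i y * g i y ^ k) y) +
      b i * (W i y * g i y ^ N)
  have hwt : SB K S P wt := by
    apply SB.add
    · apply SB.sum N hP0
      intro k
      refine ((SB.const (K := K) (S := S) (M := fun _ => 1) (fun i => -Complex.I * a i) ?_).mul
        ((hWk k).dirDeriv e he)).mono ?_ ?_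
      · intro i hi
        simpa using hna i hi
      · intro i hi
        have := hP0 i hi
        have := hR0 i hi
        positivity
      · intro i hi
        rw [one_mul]
        exact mul_le_of_le_one_right (hP0 i hi) (pow_le_one₀ (hR0 i hi) (hR1 i hi))
    · refine ((SB.const (K := K) (S := S) (M := fun i => ‖i.2.1‖) b ?_).mul (hWk N)).mono ?_ ?_
      · intro i hi
        simp [b]
      · intro i hi
        have := hP0 i hi
        have := hR0 i hi
        positivity
      · intro i hi
        calc ‖i.2.1‖ * (P i * R i ^ N) = P i * (‖i.2.1‖ * R i ^ N) := by ring
          _ ≤ P i := mul_le_of_le_one_right (hP0 i hi) (hRN i hi)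
  have hWoff : ∀ i, ∀ y ∉ K, W i y = 0 := fun i y hy => hwsupp y hy _ _ _
  have hwtoff : ∀ i, ∀ y ∉ K, wt i y = 0 := by
    intro i y hy
    have h1 : ∀ k : ℕ, dirDeriv (e i) (fun y => W i y * g i y ^ k) y = 0 := fun k =>
      dirDeriv_zero_off hK.isClosed (fun z hz => by simp [hWoff i z hz]) (e i) y hy
    simp [wt, h1, hWoff i y hy]
  refine ⟨fun y ξ ζ t => wt (ξ, ζ, t) y, fun ξ ζ t => hwt.1 (ξ, ζ, t),
    fun y hy ξ ζ t => hwtoff (ξ, ζ, t) y hy, ?_, ?_⟩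
  · intro β
    obtain ⟨C, hC⟩ := hwt.mpderiv_le β
    refine ⟨|C|, fun ξ ζ t ht h1 h2 y => ?_⟩
    have hi : ((ξ, ζ, t) : ι) ∈ S := ⟨ht, h1, h2⟩
    have hp := hP0 _ hi
    by_cases hy : y ∈ K
    · exact (hC _ hi y hy).trans (mul_le_mul_of_nonneg_right (le_abs_self C) hp)
    · have : mpderiv β (fun y' => wt (ξ, ζ, t) y') y = 0 :=
        mpderiv_zero_off hK.isClosed (hwtoff (ξ, ζ, t)) β y hy
      rw [this, norm_zero]
      exact mul_nonneg (abs_nonneg C) hp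
  · intro ξ ζ t ht h1 h2
    have hz : ζ (J ζ) ≠ 0 := by
      intro h
      have := hJ ζ
      rw [h, abs_zero] at this
      linarith
    have hb : (‖ζ‖ : ℂ) ≠ 0 := by
      have : ‖ζ‖ ≠ 0 := by linarith
      exact_mod_cast this
    have hab : a (ξ, ζ, t) * ζ (J ζ) = (‖ζ‖ : ℂ) := by
      simp only [a]
      rw [← Complex.ofReal_mul, div_mul_cancel₀ _ hz]
    have := ibp_iter hK (hW.1 (ξ, ζ, t)) (hWoff (ξ, ζ, t)) (hφs ξ ζ t) ζ (J ζ) (a (ξ, ζ, t))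
      (‖ζ‖ : ℂ) hb hab (g (ξ, ζ, t)) (hg.1 _) (fun y => rfl) N
    simp only [osc, ← mul_assoc _ (Complex.exp (Complex.I * _))] at this
    exact this
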